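/- Let Σ be a complete simplicial rational fan in ℝⁿ (n ≥ 1), let c be a positive integer, and set ρ_δ = c for every δ ∈ Σ¹. Let Δ(L) denote the union over σ ∈ Σ of the convex hulls of {0} ∪ (Σ¹ ∩ σ). Then ρ is convex if and only if Δ(L) is a convex set; and if ρ is strictly convex, then in addition no δ₀ ∈ Σ¹ lies in the convex hull of {0} ∪ (Σ¹ ∖ {δ₀}). -/

import Mathlib

/-- A vector in `ℝⁿ` is integral if all its coordinates are integers. -/
def IsIntegralVec {n : ℕ} (v : Fin n → ℝ) : Prop := ∀ i, ∃ m : ℤ, v i = (m : ℝ)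

/-- The convex cone of all nonnegative linear combinations of a finite set of vectors. -/
def coneHullOf {n : ℕ} (s : Finset (Fin n → ℝ)) : Set (Fin n → ℝ) :=
  { x | ∃ c : (Fin n → ℝ) → ℝ, (∀ v, 0 ≤ c v) ∧ x = ∑ v ∈ s, c v • v }

/-- `F` is a face of the convex cone `σ`: it is cut out of `σ` by a linear functional
that is nonnegative on `σ`. -/
def IsFaceOf {n : ℕ} (F σ : Set (Fin n → ℝ)) : Prop :=
  ∃ u : (Fin n → ℝ) →ₗ[ℝ] ℝ, (∀ x ∈ σ, 0 ≤ u x) ∧ F = {x ∈ σ | u x = 0}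

/-- A complete simplicial rational fan in `ℝⁿ`: a finite nonempty collection of
simplicial rational cones, closed under taking faces, such that the intersection of any
two members is a face of each, and whose union is all of `ℝⁿ`. -/
structure IsCompleteFan {n : ℕ} (S : Set (Set (Fin n → ℝ))) : Prop where
  finite : S.Finite
  nonempty : S.Nonempty
  simplicial : ∀ σ ∈ S, ∃ s : Finset (Fin n → ℝ),
    (∀ v ∈ s, IsIntegralVec v) ∧
    (LinearIndependent ℝ (fun v : s => (v : Fin n → ℝ))) ∧
    σ = coneHullOf s
  face_mem : ∀ σ ∈ S, ∀ F : Set (Fin n → ℝ), IsFaceOf F σ → F ∈ S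
  inter_face : ∀ σ ∈ S, ∀ τ ∈ S, IsFaceOf (σ ∩ τ) σ ∧ IsFaceOf (σ ∩ τ) τ
  complete : ⋃₀ S = Set.univ

/-- A primitive integral vector: an integral vector that is not a positive integer
multiple (with factor ≠ 1) of another integral vector. -/
def IsPrimitiveVec {n : ℕ} (v : Fin n → ℝ) : Prop :=
  IsIntegralVec v ∧ ∀ (m : ℕ) (w : Fin n → ℝ), IsIntegralVec w → v = (m : ℝ) • w → m = 1

/-- `Σ¹` : the set of primitive integral vectors spanning the one-dimensional members
of the fan `S`. -/
def fanRays {n : ℕ} (S : Set (Set (Fin n → ℝ))) : Set (Fin n → ℝ) :=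
  { v | IsPrimitiveVec v ∧ {x | ∃ t : ℝ, 0 ≤ t ∧ x = t • v} ∈ S }

/-- The convex cone generated by a set `A` : all finite nonnegative linear combinations
of elements of `A`. -/
def coneGenBy {E : Type*} [AddCommMonoid E] [Module ℝ E] (A : Set E) : Set E :=
  { x | ∃ (t : Finset E) (c : E → ℝ), ↑t ⊆ A ∧ (∀ v, 0 ≤ c v) ∧ x = ∑ v ∈ t, c v • v }

/-- The epigraph `C_ρ = {(x, α) : α ≥ f(x)}` of a function `f : ℝⁿ → ℝ`. -/
def epigraphOf {n : ℕ} (f : (Fin n → ℝ) → ℝ) : Set ((Fin n → ℝ) × ℝ) :=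
  { p | f p.1 ≤ p.2 }

/-- `ρ` is convex: for every `n`-dimensional cone `σ` of the fan `S` (i.e. `σ` spans `ℝⁿ`),
the linear functional `l_σ` agreeing with `ρ` on the rays of `S` lying in `σ`
satisfies `l_σ ≤ f_ρ` everywhere. -/
def RhoIsConvex {n : ℕ} (S : Set (Set (Fin n → ℝ))) (ρ : (Fin n → ℝ) → ℕ)
    (f : (Fin n → ℝ) → ℝ) : Prop :=
  ∀ σ ∈ S, Submodule.span ℝ σ = ⊤ →
    ∀ l : (Fin n → ℝ) →ₗ[ℝ] ℝ, (∀ δ ∈ fanRays S, δ ∈ σ → l δ = (ρ δ : ℝ)) →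
      ∀ x, l x ≤ f x

/-- `ρ` is strictly convex: for every `n`-dimensional cone `σ` of the fan `S`,
`l_σ ≤ f_ρ` everywhere, with equality exactly on `σ`. -/
def RhoIsStrictlyConvex {n : ℕ} (S : Set (Set (Fin n → ℝ))) (ρ : (Fin n → ℝ) → ℕ)
    (f : (Fin n → ℝ) → ℝ) : Prop :=
  ∀ σ ∈ S, Submodule.span ℝ σ = ⊤ →
    ∀ l : (Fin n → ℝ) →ₗ[ℝ] ℝ, (∀ δ ∈ fanRays S, δ ∈ σ → l δ = (ρ δ : ℝ)) →
      ∀ x, l x ≤ f x ∧ (l x = f x ↔ x ∈ σ)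

/-!
When `ρ` is the constant `c`, the set `Δ(L)` meets each cone of the fan in its part where `f_ρ ≤ c`,
so `Δ(L)` is the sublevel set `{f_ρ ≤ c}`. Convexity of `ρ` means that `f_ρ` is subadditive: the
functional `l_σ` of a full-dimensional cone `σ ∋ x + y` lies below `f_ρ`, which gives
`f_ρ (x + y) ≤ f_ρ x + f_ρ y`; conversely every `x` is a difference of two elements of `σ`, and
subadditivity then yields `l_σ x ≤ f_ρ x`. For a nonnegative, positively homogeneous function,
subadditivity is equivalent to convexity of one sublevel set at a positive height.

If `ρ` is strictly convex, `l_σ` attains its maximum over `Δ(L)` exactly on a face contained in `σ`.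
Intersecting this face with the ray of `δ₀` shows that `δ₀` is an extreme point of `Δ(L)`, hence not
in the convex hull of the other points of `Δ(L)`.
-/

section Cones

variable {E : Type*} [AddCommGroup E] [Module ℝ E]

theorem mem_hull_singleton_iff {v x : E} :
    x ∈ PointedCone.hull ℝ {v} ↔ ∃ t : ℝ, 0 ≤ t ∧ x = t • v := by
  rw [PointedCone.hull, Submodule.mem_span_singleton]
  constructor
  · rintro ⟨t, rfl⟩
    exact ⟨t, t.2, rfl⟩
  · rintro ⟨t, ht, rfl⟩
    exact ⟨⟨t, ht⟩, rfl⟩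

open scoped Pointwise in
theorem exists_mem_add_mem_of_span_eq_top {C : PointedCone ℝ E}
    (hC : Submodule.span ℝ (C : Set E) = ⊤) (x : E) : ∃ y ∈ C, x + y ∈ C := by
  rcases subsingleton_or_nontrivial E with _ | _
  · exact ⟨0, C.zero_mem, by rw [Subsingleton.elim (x + 0) 0]; exact C.zero_mem⟩
  · have hrep : (C : ConvexCone ℝ E).IsReproducing := .of_span_eq_top hC
    obtain ⟨p, hp, q, hq, hpq⟩ : x ∈ (C : Set E) - C := hrep.symm ▸ Set.mem_univ x
    exact ⟨q, hq, by rwa [← hpq, sub_add_cancel]⟩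

theorem hull_nonneg {R : Set E} {u : E →ₗ[ℝ] ℝ} (hu : ∀ v ∈ R, 0 ≤ u v) :
    ∀ x ∈ PointedCone.hull ℝ R, 0 ≤ u x := by
  have hle : PointedCone.hull ℝ R ≤ (PointedCone.positive ℝ ℝ).comap u :=
    Submodule.span_le.2 hu
  exact hle

theorem hull_sep_eq_zero {R : Set E} {u : E →ₗ[ℝ] ℝ} (hu : ∀ v ∈ R, 0 ≤ u v) :
    {x ∈ (PointedCone.hull ℝ R : Set E) | u x = 0} = PointedCone.hull ℝ {v ∈ R | u v = 0} := by
  ext x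
  constructor
  · rintro ⟨hx, hux⟩
    obtain ⟨w, hwR, hw, rfl⟩ := PointedCone.mem_hull_set.1 hx
    simp only [Finsupp.sum, map_sum, map_smul, smul_eq_mul] at hux
    rw [Finset.sum_eq_zero_iff_of_nonneg fun v hv => mul_nonneg (hw v) (hu v (hwR hv))] at hux
    refine PointedCone.mem_hull_set.2 ⟨w, fun v hv => ⟨hwR hv, ?_⟩, hw, rfl⟩
    exact (mul_eq_zero.1 (hux v hv)).resolve_left (Finsupp.mem_support_iff.1 hv)
  · intro hx
    refine ⟨Submodule.span_mono (Set.sep_subset _ _) hx, ?_⟩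
    have hzero : Set.EqOn u (0 : E →ₗ[ℝ] ℝ) {v ∈ R | u v = 0} := fun v hv => hv.2
    exact LinearMap.eqOn_span hzero (PointedCone.hull_le_span ℝ _ hx)

theorem exists_linearMap_eqOn {s : Set E} (hs : LinearIndepOn ℝ id s) (g : E → ℝ) :
    ∃ u : E →ₗ[ℝ] ℝ, Set.EqOn u g s := by
  refine ⟨(Module.Basis.extend hs).constr ℝ fun v => g v, fun v hv => ?_⟩
  simpa only [Module.Basis.extend_apply_self] using
    (Module.Basis.extend hs).constr_basis ℝ (fun v => g v) ⟨v, Module.Basis.subset_extend hs hv⟩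

theorem sum_smul_mem_of_zero_mem {ι : Type*} {D : Set E} (hD : Convex ℝ D) (h0 : (0 : E) ∈ D)
    {t : Finset ι} {w : ι → ℝ} {z : ι → E} (hw : ∀ i ∈ t, 0 ≤ w i) (hz : ∀ i ∈ t, z i ∈ D)
    (hsum : ∑ i ∈ t, w i ≤ 1) : ∑ i ∈ t, w i • z i ∈ D := by
  rcases (Finset.sum_nonneg hw).eq_or_lt' with h | hpos
  · have hw0 := (Finset.sum_eq_zero_iff_of_nonneg hw).1 h
    rwa [Finset.sum_eq_zero fun i hi => by rw [hw0 i hi, zero_smul]]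
  · have hmem := hD.smul_mem_of_zero_mem h0 (hD.centerMass_mem hw hpos hz) ⟨hpos.le, hsum⟩
    rwa [Finset.centerMass, smul_inv_smul₀ hpos.ne'] at hmem

theorem convexHull_zero_union_eq {R : Set E} {l : E →ₗ[ℝ] ℝ} {c : ℝ} (hc : 0 < c)
    (hl : ∀ v ∈ R, l v = c) :
    convexHull ℝ ({0} ∪ R) = {x ∈ (PointedCone.hull ℝ R : Set E) | l x ≤ c} := by
  apply Set.Subset.antisymm
  · have hconv : Convex ℝ {x ∈ (PointedCone.hull ℝ R : Set E) | l x ≤ c} :=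
      (PointedCone.convex (PointedCone.hull ℝ R)).inter (convex_halfSpace_le l.isLinear c)
    refine convexHull_min (Set.union_subset ?_ fun v hv => ?_) hconv
    · rw [Set.singleton_subset_iff]
      exact ⟨Submodule.zero_mem _, by rw [map_zero]; exact hc.le⟩
    · exact ⟨PointedCone.subset_hull hv, (hl v hv).le⟩
  · rintro x ⟨hx, hlx⟩
    obtain ⟨w, hwR, hw, rfl⟩ := PointedCone.mem_hull_set.1 hx
    have hsum : l (w.sum fun v a => a • v) = (∑ v ∈ w.support, w v) * c := by
      rw [Finsupp.sum, map_sum, Finset.sum_mul]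
      exact Finset.sum_congr rfl fun v hv => by rw [map_smul, hl v (hwR hv), smul_eq_mul]
    rw [hsum, mul_le_iff_le_one_left hc] at hlx
    have hgen : {0} ∪ R ⊆ convexHull ℝ ({0} ∪ R) := subset_convexHull ℝ _
    exact sum_smul_mem_of_zero_mem (convex_convexHull ℝ ({0} ∪ R)) (hgen (Or.inl rfl))
      (fun v _ => hw v) (fun v hv => hgen (Or.inr (hwR hv))) hlx

theorem isExtreme_sep_eq {A : Set E} {l : E →ₗ[ℝ] ℝ} {c : ℝ} (hl : ∀ x ∈ A, l x ≤ c) :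
    IsExtreme ℝ A {x ∈ A | l x = c} := by
  refine ⟨Set.sep_subset _ _, ?_⟩
  rintro x hx y hy _ ⟨-, hz⟩ ⟨a, b, ha, hb, hab, rfl⟩
  refine ⟨hx, (hl x hx).antisymm ?_⟩
  rw [map_add, map_smul, map_smul, smul_eq_mul, smul_eq_mul] at hz
  have hmean : a * c + b * c = c := by rw [← add_mul, hab, one_mul]
  have hby : b * l y ≤ b * c := mul_le_mul_of_nonneg_left (hl y hy) hb.le
  exact le_of_mul_le_mul_left (by linarith) ha

theorem convex_sublevel_iff_subadditive {f : E → ℝ} (hf : ∀ x, 0 ≤ f x)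
    (hsmul : ∀ t : ℝ, 0 ≤ t → ∀ x, f (t • x) = t * f x) {c : ℝ} (hc : 0 < c) :
    Convex ℝ {x | f x ≤ c} ↔ ∀ x y, f (x + y) ≤ f x + f y := by
  constructor
  · intro hconv x y
    have hscale : ∀ z a, 0 < a → f z ≤ a → (c / a) • z ∈ {x | f x ≤ c} := by
      intro z a ha hza
      rw [Set.mem_ofPred_eq, hsmul _ (by positivity), div_mul_eq_mul_div, div_le_iff₀ ha]
      gcongr
    refine le_of_forall_pos_le_add fun ε hε => ?_
    have ha : 0 < f x + ε / 2 := by linarith [hf x]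
    have hb : 0 < f y + ε / 2 := by linarith [hf y]
    generalize hxa : f x + ε / 2 = a at ha
    generalize hyb : f y + ε / 2 = b at hb
    have hmem := hconv (hscale x a ha (by linarith)) (hscale y b hb (by linarith))
      (a := a / (a + b)) (b := b / (a + b)) (by positivity) (by positivity) (by field_simp)
    have hcomb : (a / (a + b)) • (c / a) • x + (b / (a + b)) • (c / b) • y
        = (c / (a + b)) • (x + y) := by
      rw [smul_smul, smul_smul, smul_add]
      congr 2 <;> field_simp
    rw [hcomb, Set.mem_ofPred_eq, hsmul _ (by positivity), div_mul_eq_mul_div,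
      div_le_iff₀ (by positivity)] at hmem
    linarith [le_of_mul_le_mul_left hmem hc]
  · intro hadd x hx y hy a b ha hb hab
    calc f (a • x + b • y) ≤ f (a • x) + f (b • y) := hadd _ _
      _ = a * f x + b * f y := by rw [hsmul a ha, hsmul b hb]
      _ ≤ a * c + b * c := by gcongr <;> assumption
      _ = c := by rw [← add_mul, hab, one_mul]

end Cones

section Topology

theorem isClosed_hull {E : Type*} [AddCommGroup E] [Module ℝ E] [TopologicalSpace E]
    [IsTopologicalAddGroup E] [ContinuousSMul ℝ E] [T2Space E] {s : Set E} (hs : s.Finite)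
    (hli : LinearIndepOn ℝ id s) : IsClosed (PointedCone.hull ℝ s : Set E) := by
  have := hs.fintype
  let L : (s → ℝ) →ₗ[ℝ] E := Fintype.linearCombination ℝ ((↑) : s → E)
  have hL : Topology.IsClosedEmbedding L := LinearMap.isClosedEmbedding_of_injective
    (LinearMap.ker_eq_bot.2 hli.fintypeLinearCombination_injective)
  have himage : (PointedCone.hull ℝ s : Set E) = L '' Set.Ici 0 := by
    ext x
    rw [SetLike.mem_coe, PointedCone.hull, Submodule.mem_span_iff_of_fintype]
    constructor
    · rintro ⟨a, rfl⟩
      exact ⟨fun v => a v, fun v => (a v).2, rfl⟩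
    · rintro ⟨a, ha, rfl⟩
      exact ⟨fun v => ⟨a v, ha v⟩, rfl⟩
  rw [himage]
  exact hL.isClosedMap _ isClosed_Ici

theorem exists_mem_span_eq_top_of_sUnion_eq_univ {E : Type*} [NormedAddCommGroup E]
    [NormedSpace ℝ E] [FiniteDimensional ℝ E] {S : Set (Set E)} (hfin : S.Finite)
    (hclosed : ∀ σ ∈ S, IsClosed σ) (hcover : ⋃₀ S = Set.univ) (z : E) :
    ∃ σ ∈ S, z ∈ σ ∧ Submodule.span ℝ σ = ⊤ := by
  -- The members that do not span `E` lie in finitely many proper subspaces, whose union has dense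
  -- complement; hence the union of the spanning members is dense, and it is closed.
  have := FiniteDimensional.complete ℝ E
  let T := {σ ∈ S | Submodule.span ℝ σ = ⊤}
  let P := {σ ∈ S | Submodule.span ℝ σ ≠ ⊤}
  have hT : IsClosed (⋃₀ T) := by
    rw [Set.sUnion_eq_biUnion]
    exact (hfin.subset (Set.sep_subset _ _)).isClosed_biUnion fun σ hσ => hclosed σ hσ.1
  have hP : Dense (⋂ σ ∈ P, (Submodule.span ℝ σ : Set E)ᶜ) := by
    refine dense_biInter_of_isOpen
      (fun σ _ => (Submodule.closed_of_finiteDimensional _).isOpen_compl)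
      (hfin.subset (Set.sep_subset _ _)).countable fun σ hσ => ?_
    rw [← interior_eq_empty_iff_dense_compl, ← Set.not_nonempty_iff_eq_empty]
    exact fun h => hσ.2 (Submodule.eq_top_of_nonempty_interior' _ h)
  have hsub : ⋂ σ ∈ P, (Submodule.span ℝ σ : Set E)ᶜ ⊆ ⋃₀ T := by
    intro y hy
    obtain ⟨σ, hσ, hyσ⟩ : y ∈ ⋃₀ S := hcover ▸ Set.mem_univ y
    refine ⟨σ, ⟨hσ, ?_⟩, hyσ⟩
    by_contra hspan
    exact Set.mem_iInter₂.1 hy σ ⟨hσ, hspan⟩ (Submodule.subset_span hyσ)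
  have hz : z ∈ ⋃₀ T := hT.closure_eq ▸ (hP.mono hsub) z
  obtain ⟨σ, ⟨hσ, hspan⟩, hzσ⟩ := hz
  exact ⟨σ, hσ, hzσ, hspan⟩

end Topology

section Primitive

variable {n : ℕ}

theorem isPrimitiveVec_of_gcd_eq_one {m : Fin n → ℤ} (hm : Finset.univ.gcd m = 1) :
    IsPrimitiveVec fun i => (m i : ℝ) := by
  refine ⟨fun i => ⟨m i, rfl⟩, fun k w hw hmw => ?_⟩
  choose q hq using hw
  have hdvd : (k : ℤ) ∣ Finset.univ.gcd m := by
    refine Finset.dvd_gcd fun i _ => ⟨q i, ?_⟩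
    have hi : (m i : ℝ) = k * q i := by
      simpa only [Pi.smul_apply, smul_eq_mul, hq] using congrFun hmw i
    exact_mod_cast hi
  rw [hm] at hdvd
  exact_mod_cast Int.eq_one_of_dvd_one k.cast_nonneg hdvd

theorem IsIntegralVec.exists_isPrimitiveVec {v : Fin n → ℝ} (hv : IsIntegralVec v) (hv0 : v ≠ 0) :
    ∃ w, IsPrimitiveVec w ∧ ∃ r : ℝ, 0 < r ∧ v = r • w := by
  choose m hm using hv
  obtain ⟨i, -⟩ := Function.ne_iff.1 hv0
  obtain ⟨g, hmg, hg⟩ := Finset.univ.extract_gcd m ⟨i, Finset.mem_univ i⟩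
  have hvg : v = ((Finset.univ.gcd m : ℤ) : ℝ) • fun i => (g i : ℝ) := by
    ext j
    rw [hm, hmg j (Finset.mem_univ j), Int.cast_mul, Pi.smul_apply, smul_eq_mul]
  refine ⟨_, isPrimitiveVec_of_gcd_eq_one hg, _, ?_, hvg⟩
  have hgcd : Finset.univ.gcd m ≠ 0 := by
    intro h
    exact hv0 (by rw [hvg, h, Int.cast_zero, zero_smul])
  have hnonneg : 0 ≤ Finset.univ.gcd m :=
    Int.nonneg_of_normalize_eq_self Finset.normalize_gcd
  exact_mod_cast hnonneg.lt_of_ne' hgcd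

end Primitive

section Faces

variable {n : ℕ}

theorem coneHullOf_eq_hull (s : Finset (Fin n → ℝ)) :
    coneHullOf s = PointedCone.hull ℝ (s : Set (Fin n → ℝ)) := by
  ext x
  constructor
  · rintro ⟨a, ha, rfl⟩
    exact sum_mem fun v hv => PointedCone.smul_mem _ (ha v) (PointedCone.subset_hull hv)
  · intro hx
    obtain ⟨a, -, rfl⟩ := Submodule.mem_span_finset.1 hx
    exact ⟨fun v => a v, fun v => (a v).2, rfl⟩

theorem isFaceOf_hull_of_subset {s t : Set (Fin n → ℝ)} (hs : LinearIndepOn ℝ id s) (hts : t ⊆ s) :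
    IsFaceOf (PointedCone.hull ℝ t : Set (Fin n → ℝ)) (PointedCone.hull ℝ s) := by
  obtain ⟨u, hu⟩ := exists_linearMap_eqOn hs (tᶜ.indicator 1)
  have hnonneg : ∀ v ∈ s, 0 ≤ u v := fun v hv =>
    hu hv ▸ Set.indicator_nonneg (fun _ _ => zero_le_one) v
  refine ⟨u, hull_nonneg hnonneg, ?_⟩
  have hzero : {v ∈ s | u v = 0} = t := by
    ext v
    constructor
    · rintro ⟨hv, huv⟩
      simpa [hu hv] using huv
    · exact fun hv => ⟨hts hv, by simp [hu (hts hv), hv]⟩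
  rw [hull_sep_eq_zero hnonneg, hzero]

theorem IsFaceOf.isExtreme {F σ : Set (Fin n → ℝ)} (h : IsFaceOf F σ) : IsExtreme ℝ σ F := by
  obtain ⟨u, hu, rfl⟩ := h
  have := isExtreme_sep_eq (A := σ) (l := -u) (c := 0) fun x hx => neg_nonpos.2 (hu x hx)
  simpa only [LinearMap.neg_apply, neg_eq_zero] using this

end Faces

/-- `f` restricts to a linear functional on each member of `S`. For a fan these are the functions
`f_ρ`, each determined by its values on the rays. -/
def IsLinearOnCones {E : Type*} [AddCommGroup E] [Module ℝ E] (S : Set (Set E))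
    (f : E → ℝ) : Prop :=
  ∀ σ ∈ S, ∃ l : E →ₗ[ℝ] ℝ, Set.EqOn f l σ

namespace IsCompleteFan

variable {n : ℕ} {S : Set (Set (Fin n → ℝ))} {σ : Set (Fin n → ℝ)}

theorem exists_mem (hS : IsCompleteFan S) (x : Fin n → ℝ) : ∃ σ ∈ S, x ∈ σ :=
  Set.mem_sUnion.1 (hS.complete ▸ Set.mem_univ x)

theorem exists_eq_hull (hS : IsCompleteFan S) (hσ : σ ∈ S) :
    ∃ s : Finset (Fin n → ℝ), (∀ v ∈ s, IsIntegralVec v) ∧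
      LinearIndepOn ℝ id (s : Set (Fin n → ℝ)) ∧ σ = PointedCone.hull ℝ (s : Set (Fin n → ℝ)) := by
  obtain ⟨s, hint, hli, rfl⟩ := hS.simplicial σ hσ
  exact ⟨s, hint, hli, coneHullOf_eq_hull s⟩

theorem exists_full_dimensional (hS : IsCompleteFan S) (x : Fin n → ℝ) :
    ∃ σ ∈ S, x ∈ σ ∧ Submodule.span ℝ σ = ⊤ := by
  refine exists_mem_span_eq_top_of_sUnion_eq_univ hS.finite (fun σ hσ => ?_) hS.complete x
  obtain ⟨s, -, hli, rfl⟩ := hS.exists_eq_hull hσ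
  exact isClosed_hull s.finite_toSet hli

theorem eq_hull_rays (hS : IsCompleteFan S) (hσ : σ ∈ S) :
    σ = PointedCone.hull ℝ (fanRays S ∩ σ) := by
  obtain ⟨s, hint, hli, rfl⟩ := hS.exists_eq_hull hσ
  refine congrArg _ (le_antisymm (Submodule.span_le.2 fun v hv => ?_)
    (Submodule.span_le.2 Set.inter_subset_right))
  obtain ⟨w, hw, r, hr, rfl⟩ := (hint v hv).exists_isPrimitiveVec (hli.ne_zero hv)
  have hray : {x | ∃ t : ℝ, 0 ≤ t ∧ x = t • w} ∈ S := by
    convert hS.face_mem _ hσ _ (isFaceOf_hull_of_subset hli (Set.singleton_subset_iff.2 hv))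
    ext x
    rw [SetLike.mem_coe, mem_hull_singleton_iff]
    constructor
    · rintro ⟨t, ht, rfl⟩
      exact ⟨t / r, by positivity, by rw [smul_smul, div_mul_cancel₀ _ hr.ne']⟩
    · rintro ⟨t, ht, rfl⟩
      exact ⟨t * r, by positivity, smul_smul t r w⟩
  have hwσ : w ∈ PointedCone.hull ℝ (s : Set (Fin n → ℝ)) :=
    (PointedCone.smul_mem_iff _ hr).1 (PointedCone.subset_hull hv)
  exact PointedCone.smul_mem _ hr.le (PointedCone.subset_hull ⟨⟨hw, hray⟩, hwσ⟩)

theorem eqOn_of_eqOn_rays (hS : IsCompleteFan S) (hσ : σ ∈ S) {l l' : (Fin n → ℝ) →ₗ[ℝ] ℝ}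
    (h : Set.EqOn l l' (fanRays S ∩ σ)) : Set.EqOn l l' σ := by
  intro x hx
  rw [hS.eq_hull_rays hσ] at hx
  exact LinearMap.eqOn_span h (PointedCone.hull_le_span ℝ _ hx)

end IsCompleteFan

namespace IsLinearOnCones

variable {n : ℕ} {S : Set (Set (Fin n → ℝ))} {f : (Fin n → ℝ) → ℝ} {ρ : (Fin n → ℝ) → ℕ}

theorem eqOn_of_eqOn_rays (hf : IsLinearOnCones S f) (hS : IsCompleteFan S)
    {σ : Set (Fin n → ℝ)} (hσ : σ ∈ S) {l : (Fin n → ℝ) →ₗ[ℝ] ℝ}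
    (h : Set.EqOn l f (fanRays S ∩ σ)) : Set.EqOn l f σ := by
  obtain ⟨l', hl'⟩ := hf σ hσ
  exact (hS.eqOn_of_eqOn_rays hσ (h.trans (hl'.mono Set.inter_subset_right))).trans hl'.symm

theorem map_smul_of_nonneg (hf : IsLinearOnCones S f) (hS : IsCompleteFan S) {t : ℝ} (ht : 0 ≤ t)
    (x : Fin n → ℝ) : f (t • x) = t * f x := by
  obtain ⟨σ, hσ, hx⟩ := hS.exists_mem x
  obtain ⟨l, hl⟩ := hf σ hσ
  have htx : t • x ∈ σ := by
    rw [hS.eq_hull_rays hσ] at hx ⊢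
    exact PointedCone.smul_mem _ ht hx
  rw [hl htx, hl hx, map_smul, smul_eq_mul]

theorem nonneg_of_nonneg_rays (hf : IsLinearOnCones S f) (hS : IsCompleteFan S)
    (hrays : ∀ δ ∈ fanRays S, 0 ≤ f δ) (x : Fin n → ℝ) : 0 ≤ f x := by
  obtain ⟨σ, hσ, hx⟩ := hS.exists_mem x
  obtain ⟨l, hl⟩ := hf σ hσ
  rw [hl hx]
  rw [hS.eq_hull_rays hσ] at hx
  exact hull_nonneg (fun δ hδ => hl hδ.2 ▸ hrays δ hδ.1) x hx

theorem rhoIsConvex_iff_subadditive (hf : IsLinearOnCones S f) (hS : IsCompleteFan S)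
    (hρ : ∀ δ ∈ fanRays S, f δ = ρ δ) :
    RhoIsConvex S ρ f ↔ ∀ x y, f (x + y) ≤ f x + f y := by
  constructor
  · intro hconv x y
    obtain ⟨σ, hσ, hxy, hspan⟩ := hS.exists_full_dimensional (x + y)
    obtain ⟨l, hl⟩ := hf σ hσ
    have hle := hconv σ hσ hspan l fun δ hδ hδσ => by rw [← hl hδσ, hρ δ hδ]
    calc f (x + y) = l x + l y := by rw [hl hxy, map_add]
      _ ≤ f x + f y := add_le_add (hle x) (hle y)
  · intro hadd σ hσ hspan l hl x
    have hlf : Set.EqOn l f σ :=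
      hf.eqOn_of_eqOn_rays hS hσ fun δ hδ => by rw [hl δ hδ.1 hδ.2, hρ δ hδ.1]
    obtain ⟨y, hy, hxy⟩ : ∃ y ∈ σ, x + y ∈ σ := by
      rw [hS.eq_hull_rays hσ] at hspan ⊢
      exact exists_mem_add_mem_of_span_eq_top hspan x
    calc l x = f (x + y) - f y := by rw [← hlf hxy, ← hlf hy, map_add, add_sub_cancel_right]
      _ ≤ f x := sub_le_iff_le_add.2 (hadd x y)

theorem iUnion_convexHull_eq_sublevel (hf : IsLinearOnCones S f) (hS : IsCompleteFan S) {c : ℝ}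
    (hc : 0 < c) (hrays : ∀ δ ∈ fanRays S, f δ = c) :
    ⋃ σ ∈ S, convexHull ℝ ({0} ∪ (fanRays S ∩ σ)) = {x | f x ≤ c} := by
  have hcone : ∀ σ ∈ S, convexHull ℝ ({0} ∪ (fanRays S ∩ σ)) = {x ∈ σ | f x ≤ c} := by
    intro σ hσ
    obtain ⟨l, hl⟩ := hf σ hσ
    rw [convexHull_zero_union_eq hc fun δ hδ => by rw [← hl hδ.2, hrays δ hδ.1],
      ← hS.eq_hull_rays hσ]
    exact Set.sep_ext_iff.2 fun x hx => by rw [hl hx]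
  ext x
  simp only [Set.mem_iUnion, exists_prop]
  constructor
  · rintro ⟨σ, hσ, hx⟩
    rw [hcone σ hσ] at hx
    exact hx.2
  · intro hx
    obtain ⟨σ, hσ, hxσ⟩ := hS.exists_mem x
    exact ⟨σ, hσ, hcone σ hσ ▸ ⟨hxσ, hx⟩⟩

theorem mem_extremePoints_sublevel (hf : IsLinearOnCones S f) (hS : IsCompleteFan S)
    (hρ : ∀ δ ∈ fanRays S, f δ = ρ δ) (hstrict : RhoIsStrictlyConvex S ρ f) {δ₀ : Fin n → ℝ}
    (hδ₀ : δ₀ ∈ fanRays S) (hne : f δ₀ ≠ 0) : δ₀ ∈ Set.extremePoints ℝ {x | f x ≤ f δ₀} := by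
  obtain ⟨σ, hσ, hδ₀σ, hspan⟩ := hS.exists_full_dimensional δ₀
  obtain ⟨l, hl⟩ := hf σ hσ
  have hsupp := hstrict σ hσ hspan l fun δ hδ hδσ => by rw [← hl hδσ, hρ δ hδ]
  have hface : IsExtreme ℝ {x | f x ≤ f δ₀} {x | f x ≤ f δ₀ ∧ l x = f δ₀} :=
    isExtreme_sep_eq fun x hx => (hsupp x).1.trans hx
  have hface_sub : {x | f x ≤ f δ₀ ∧ l x = f δ₀} ⊆ σ := fun x hx =>
    (hsupp x).2.1 ((hsupp x).1.antisymm (hx.1.trans_eq hx.2.symm))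
  have hray := (hS.inter_face σ hσ _ hδ₀.2).1.isExtreme
  refine mem_extremePoints_iff_left.2 ⟨le_refl (f δ₀), fun x hx y hy hseg => ?_⟩
  have hδ₀F : δ₀ ∈ {x | f x ≤ f δ₀ ∧ l x = f δ₀} := ⟨le_refl (f δ₀), (hl hδ₀σ).symm⟩
  have hxF := hface.left_mem_of_mem_openSegment hx hy hδ₀F hseg
  have hyF := hface.right_mem_of_mem_openSegment hx hy hδ₀F hseg
  obtain ⟨-, t, -, rfl⟩ := hray.left_mem_of_mem_openSegment (hface_sub hxF) (hface_sub hyF)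
    ⟨hδ₀σ, 1, zero_le_one, (one_smul ℝ δ₀).symm⟩ hseg
  have ht : t * f δ₀ = f δ₀ := by
    calc t * f δ₀ = l (t • δ₀) := by rw [map_smul, smul_eq_mul, hl hδ₀σ]
      _ = f δ₀ := hxF.2
  rw [(mul_eq_right₀ hne).1 ht, one_smul]

end IsLinearOnCones

theorem RhoIsStrictlyConvex.rhoIsConvex {n : ℕ} {S : Set (Set (Fin n → ℝ))}
    {ρ : (Fin n → ℝ) → ℕ} {f : (Fin n → ℝ) → ℝ} (h : RhoIsStrictlyConvex S ρ f) :
    RhoIsConvex S ρ f :=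
  fun σ hσ hspan l hl x => (h σ hσ hspan l hl x).1

/-- Let `S` be a complete simplicial rational fan in `ℝⁿ` (`n ≥ 1`), `c` a
positive integer, and `ρ_δ = c` for every ray `δ`. Let `Δ(L)` be the union over `σ ∈ S` of
the convex hulls of `{0} ∪ (Σ¹ ∩ σ)`. Then `ρ` is convex iff `Δ(L)` is convex, and if `ρ`
is strictly convex then moreover no `δ₀ ∈ Σ¹` lies in the convex hull of
`{0} ∪ (Σ¹ \ {δ₀})`. -/
theorem statement6 {n : ℕ} (hn : 1 ≤ n) (S : Set (Set (Fin n → ℝ)))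
    (hS : IsCompleteFan S) (c : ℕ) (hc : 0 < c)
    (ρ : (Fin n → ℝ) → ℕ) (hρ : ρ = fun _ => c)
    (f : (Fin n → ℝ) → ℝ)
    (hflin : ∀ σ ∈ S, ∃ l : (Fin n → ℝ) →ₗ[ℝ] ℝ, ∀ x ∈ σ, f x = l x)
    (hfval : ∀ δ ∈ fanRays S, f δ = (ρ δ : ℝ))
    (ΔL : Set (Fin n → ℝ))
    (hΔL : ΔL = ⋃ σ ∈ S, convexHull ℝ ({0} ∪ (fanRays S ∩ σ))) :
    (RhoIsConvex S ρ f ↔ Convex ℝ ΔL) ∧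
    (RhoIsStrictlyConvex S ρ f →
      ∀ δ₀ ∈ fanRays S, δ₀ ∉ convexHull ℝ ({0} ∪ (fanRays S \ {δ₀}))) := by
  subst hρ hΔL
  have hf : IsLinearOnCones S f := hflin
  have hcpos : (0 : ℝ) < c := Nat.cast_pos.2 hc
  have hnonneg : ∀ x, 0 ≤ f x := hf.nonneg_of_nonneg_rays hS fun δ hδ => hfval δ hδ ▸ hcpos.le
  have hconv : RhoIsConvex S (fun _ => c) f ↔ Convex ℝ {x | f x ≤ c} :=
    (hf.rhoIsConvex_iff_subadditive hS hfval).trans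
      (convex_sublevel_iff_subadditive hnonneg (fun _ => hf.map_smul_of_nonneg hS) hcpos).symm
  refine ⟨by rwa [hf.iUnion_convexHull_eq_sublevel hS hcpos hfval], fun hstrict δ₀ hδ₀ hmem => ?_⟩
  have hfδ₀ : f δ₀ = c := hfval δ₀ hδ₀
  have hext : δ₀ ∈ Set.extremePoints ℝ {x | f x ≤ c} :=
    hfδ₀ ▸ hf.mem_extremePoints_sublevel hS hfval hstrict hδ₀ (hfδ₀ ▸ hcpos.ne')
  have hf0 : f 0 = 0 := by simpa only [zero_smul, zero_mul] using hf.map_smul_of_nonneg hS le_rfl 0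
  have hδ₀_ne : (0 : Fin n → ℝ) ≠ δ₀ := by
    rintro rfl
    exact hcpos.ne (hf0.symm.trans hfδ₀)
  have hsub : {0} ∪ (fanRays S \ {δ₀}) ⊆ {x | f x ≤ c} \ {δ₀} :=
    Set.union_subset (Set.singleton_subset_iff.2 ⟨hf0.trans_le hcpos.le, hδ₀_ne⟩)
      (Set.sdiff_subset_sdiff_left fun δ hδ => (hfval δ hδ).le)
  exact ((hconv.1 hstrict.rhoIsConvex).mem_extremePoints_iff_mem_sdiff_convexHull_sdiff.1 hext).2
    (convexHull_mono hsub hmem)
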